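/- arXiv:2202.01278 — 4 statements merged into one kernel-verified Lean document; each statement's English description precedes it below -/
import Mathlib

section
/- Let m ∈ ℕ with m ≥ 1 and let α > m−1. Then all roots of the polynomial L_m^{(−α−1)} in ℂ are simple; that is, L_m^{(−α−1)} and its derivative have no common root in ℂ. -/
open Finset

/-- Generalized binomial coefficient `C(t, j) = t(t-1)⋯(t-j+1)/j!`. -/
noncomputable def genBinom (t : ℝ) (j : ℕ) : ℝ :=
  (∏ i ∈ Finset.range j, (t - i)) / (Nat.factorial j)

/-- Generalized Laguerre polynomial `L_n^{(α)}(x)` evaluated at complex `x`. -/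
noncomputable def laguerreC (α : ℝ) (n : ℕ) (x : ℂ) : ℂ :=
  ∑ k ∈ Finset.range (n + 1),
    ((-1 : ℂ) ^ k / (Nat.factorial k)) * (genBinom ((n : ℝ) + α) (n - k) : ℂ) * x ^ k

open Polynomial in
/-- Laguerre polynomial as a polynomial. -/
noncomputable def lagP (β : ℝ) (n : ℕ) : Polynomial ℂ :=
  ∑ k ∈ Finset.range (n + 1),
    Polynomial.monomial k (((-1 : ℂ) ^ k / (Nat.factorial k)) * (genBinom ((n : ℝ) + β) (n - k) : ℂ))

lemma lagP_eval (β : ℝ) (n : ℕ) (x : ℂ) : (lagP β n).eval x = laguerreC β n x := by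
  simp [lagP, laguerreC, Polynomial.eval_finsetSum]

lemma lagP_coeff (β : ℝ) (n k : ℕ) : (lagP β n).coeff k =
    if k < n + 1 then ((-1 : ℂ) ^ k / (Nat.factorial k)) * (genBinom ((n : ℝ) + β) (n - k) : ℂ)
    else 0 := by
  simp only [lagP, Polynomial.finsetSum_coeff, Polynomial.coeff_monomial]
  rw [Finset.sum_ite_eq' (Finset.range (n + 1)) k]
  simp only [Finset.mem_range]

lemma genBinom_succ (t : ℝ) (j : ℕ) : genBinom t (j + 1) * (j + 1) = genBinom t j * (t - j) := by
  unfold genBinom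
  rw [Finset.prod_range_succ, Nat.factorial_succ]
  have := Nat.factorial_pos j
  push_cast
  field_simp

lemma lagP_rec (m : ℕ) (α : ℝ) (k : ℕ) :
    ((k : ℂ) + 1) * (k - α) * (lagP (-α - 1) m).coeff (k + 1)
      = (k - m) * (lagP (-α - 1) m).coeff k := by
  rw [lagP_coeff, lagP_coeff]
  rcases lt_trichotomy k m with h | h | h
  · rw [if_pos (by omega), if_pos (by omega)]
    obtain ⟨j, rfl⟩ : ∃ j, m = k + 1 + j := ⟨m - (k + 1), by omega⟩
    have e1 : k + 1 + j - (k + 1) = j := by omega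
    have e2 : k + 1 + j - k = j + 1 := by omega
    rw [e1, e2]
    have hg := genBinom_succ (((k + 1 + j : ℕ) : ℝ) + (-α - 1)) j
    have hg' := congrArg (fun x : ℝ => (x : ℂ)) hg
    generalize genBinom (((k + 1 + j : ℕ) : ℝ) + (-α - 1)) (j + 1) = A at *
    generalize genBinom (((k + 1 + j : ℕ) : ℝ) + (-α - 1)) j = B at *
    push_cast at hg'
    rw [Nat.factorial_succ, pow_succ]
    have h1 : (Nat.factorial k : ℂ) ≠ 0 := by exact_mod_cast Nat.factorial_ne_zero k
    have h2 : (k : ℂ) + 1 ≠ 0 := by exact_mod_cast Nat.succ_ne_zero k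
    push_cast
    field_simp
    linear_combination hg'
  · subst h
    simp
  · rw [if_neg (by omega), if_neg (by omega)]
    simp

open Polynomial in
lemma lagP_ode (m : ℕ) (α : ℝ) (n : ℕ) :
    X * derivative^[n + 2] (lagP (-α - 1) m)
      + (C ((n : ℂ) - α) - X) * derivative^[n + 1] (lagP (-α - 1) m)
      + C ((m : ℂ) - n) * derivative^[n] (lagP (-α - 1) m) = 0 := by
  induction n with
  | zero =>
    ext k
    have h := lagP_rec m α k
    rcases k with _ | k
    · simp [sub_mul, coeff_derivative] at h ⊢
      linear_combination -h
    · simp [sub_mul, coeff_derivative, coeff_X_mul] at h ⊢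
      linear_combination h
  | succ n ih =>
    have h := congrArg derivative ih
    simp only [derivative_add, derivative_mul, derivative_sub, derivative_X, derivative_C,
      derivative_zero, ← Function.iterate_succ_apply' (f := derivative)] at h
    have e1 : C (((n + 1 : ℕ) : ℂ) - α) = C ((n : ℂ) - α) + 1 := by
      rw [← C_1, ← C_add]; congr 1; push_cast; ring
    have e2 : C ((m : ℂ) - ((n + 1 : ℕ) : ℂ)) = C ((m : ℂ) - n) - 1 := by
      rw [← C_1, ← C_sub]; congr 1; push_cast; ring
    rw [e1, e2]
    simp only [Nat.succ_eq_add_one, add_assoc, Nat.reduceAdd] at h ⊢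
    linear_combination h

lemma lagP_zero (m : ℕ) (α : ℝ) (hα : (m : ℝ) - 1 < α) : (lagP (-α - 1) m).eval 0 ≠ 0 := by
  rw [← Polynomial.coeff_zero_eq_eval_zero, lagP_coeff]
  simp only [if_true, pow_zero, Nat.factorial_zero, Nat.cast_one, div_one, one_mul,
    Nat.sub_zero, genBinom, Nat.zero_lt_succ]
  rw [Complex.ofReal_ne_zero]
  refine div_ne_zero (Finset.prod_ne_zero_iff.mpr fun i _ => ?_)
    (by exact_mod_cast Nat.factorial_ne_zero m)
  have : (0 : ℝ) ≤ i := Nat.cast_nonneg i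
  linarith

theorem stmt16 (m : ℕ) (hm : 1 ≤ m) (α : ℝ) (hα : (m : ℝ) - 1 < α) :
    ∀ z : ℂ, laguerreC (-α - 1) m z = 0 → deriv (laguerreC (-α - 1) m) z ≠ 0 := by
  intro z hz hd
  have hf : laguerreC (-α - 1) m = fun x => (lagP (-α - 1) m).eval x := by
    funext x; rw [lagP_eval]
  rw [hf, Polynomial.deriv] at hd
  rw [← lagP_eval] at hz
  have h0 := lagP_zero m α hα
  have hz0 : z ≠ 0 := by rintro rfl; exact h0 hz
  have key : ∀ n : ℕ, (Polynomial.derivative^[n] (lagP (-α - 1) m)).eval z = 0 ∧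
      (Polynomial.derivative^[n + 1] (lagP (-α - 1) m)).eval z = 0 := by
    intro n
    induction n with
    | zero => exact ⟨hz, hd⟩
    | succ n ih =>
      refine ⟨ih.2, ?_⟩
      have h := congrArg (Polynomial.eval z) (lagP_ode m α n)
      simp only [Polynomial.eval_add, Polynomial.eval_mul, ih.1, ih.2, Polynomial.eval_X, mul_zero,
        add_zero, Polynomial.eval_zero] at h
      exact (mul_eq_zero.mp h).resolve_left hz0
  apply h0
  have : lagP (-α - 1) m = 0 := by
    apply Polynomial.eq_zero_of_hasseDeriv_eq_zero _ z
    intro k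
    have h := (key k).1
    rw [← Polynomial.factorial_smul_hasseDeriv] at h
    rw [LinearMap.smul_apply, Polynomial.eval_smul, nsmul_eq_mul, mul_eq_zero] at h
    exact h.resolve_left (by exact_mod_cast Nat.factorial_ne_zero k)
  rw [this, Polynomial.eval_zero]
end

section
/- Let m ∈ ℕ with m ≥ 1 and let α > m−1. Then L_m^{(−α−1)}(x) ≠ 0 for every real x > 0. -/
open Finset

/-- Generalized Laguerre polynomial `L_n^{(α)}(x)`. -/
noncomputable def laguerre (α : ℝ) (n : ℕ) (x : ℝ) : ℝ :=
  ∑ k ∈ Finset.range (n + 1),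
    ((-1 : ℝ) ^ k / (Nat.factorial k)) * genBinom ((n : ℝ) + α) (n - k) * x ^ k

theorem stmt17 (m : ℕ) (hm : 1 ≤ m) (α : ℝ) (hα : (m : ℝ) - 1 < α) :
    ∀ x : ℝ, 0 < x → laguerre (-α - 1) m x ≠ 0 := by
  intro x hx
  have key : 0 < (-1 : ℝ) ^ m * laguerre (-α - 1) m x := by
    unfold laguerre
    rw [Finset.mul_sum]
    refine Finset.sum_pos ?_ ⟨0, by simp⟩
    intro k hk
    have hk' : k ≤ m := by
      have := Finset.mem_range.mp hk
      omega
    have hprod : 0 < ∏ i ∈ Finset.range (m - k), (-(((m : ℝ) + (-α - 1)) - i)) := by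
      refine Finset.prod_pos ?_
      intro i _
      have : (0 : ℝ) ≤ i := Nat.cast_nonneg i
      linarith
    have hneg : ∏ i ∈ Finset.range (m - k), (((m : ℝ) + (-α - 1)) - i)
        = (-1) ^ (m - k) * ∏ i ∈ Finset.range (m - k), (-(((m : ℝ) + (-α - 1)) - i)) := by
      rw [Finset.prod_neg, Finset.card_range, ← mul_assoc, ← mul_pow]
      simp
    have hsign : (-1 : ℝ) ^ m * (-1) ^ k * (-1) ^ (m - k) = 1 := by
      rw [mul_assoc, ← pow_add, Nat.add_sub_cancel' hk', ← mul_pow]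
      simp
    unfold genBinom
    rw [hneg]
    set P := ∏ i ∈ Finset.range (m - k), (-(((m : ℝ) + (-α - 1)) - i)) with hP
    have heq : (-1 : ℝ) ^ m * ((-1) ^ k / (Nat.factorial k)
          * ((-1) ^ (m - k) * P / (Nat.factorial (m - k))) * x ^ k)
        = ((-1 : ℝ) ^ m * (-1) ^ k * (-1) ^ (m - k))
          * (P / (Nat.factorial k) / (Nat.factorial (m - k)) * x ^ k) := by
      ring
    rw [heq, hsign, one_mul]
    positivity
  intro h
  rw [h, mul_zero] at key
  exact lt_irrefl _ key
end

section
/- Let n ∈ ℕ with n ≥ 1 and let α, β ∈ ℝ satisfy α ∉ {−1,−2,…,−n}, β ∉ {−1,−2,…,−n}, and α+β ∉ {−1−n,−2−n,…,−2n}. Then all roots of the Jacobi polynomial P_n^{(α,β)} in ℂ are simple; that is, P_n^{(α,β)} and its derivative have no common root in ℂ. -/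
open Finset

/-- Jacobi polynomial `P_n^{(α,β)}(x)` for arbitrary real parameters,
evaluated at complex `x`. -/
noncomputable def jacobiC (α β : ℝ) (n : ℕ) (x : ℂ) : ℂ :=
  (Nat.factorial n : ℂ)⁻¹ *
    ∑ k ∈ Finset.range (n + 1),
      (n.choose k : ℂ) *
        (∏ i ∈ Finset.Ico k n, ((α : ℂ) + i + 1)) *
        (∏ i ∈ Finset.range k, ((α : ℂ) + β + n + 1 + i)) *
        ((x - 1) / 2) ^ k

/-- Coefficients in the variable `t = (x-1)/2`. -/
noncomputable def jacCoef (a b : ℂ) (n k : ℕ) : ℂ :=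
  (n.choose k : ℂ) * (∏ i ∈ Finset.Ico k n, (a + i + 1)) *
    (∏ i ∈ Finset.range k, (a + b + n + 1 + i))

noncomputable def jacPoly (a b : ℂ) (n : ℕ) : Polynomial ℂ :=
  ∑ k ∈ Finset.range (n + 1), Polynomial.C (jacCoef a b n k) * Polynomial.X ^ k

lemma jacPoly_coeff (a b : ℂ) (n k : ℕ) : (jacPoly a b n).coeff k = jacCoef a b n k := by
  unfold jacPoly
  simp only [Polynomial.finsetSum_coeff, Polynomial.coeff_C_mul_X_pow]
  rw [Finset.sum_ite_eq]
  split_ifs with h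
  · rfl
  · have : n < k := by simpa using h
    simp [jacCoef, Nat.choose_eq_zero_of_lt this]

lemma jacCoef_rec (a b : ℂ) (n k : ℕ) :
    ((k : ℂ) + 1) * (k + 1 + a) * jacCoef a b n (k + 1)
      = ((n : ℂ) - k) * (n + k + a + b + 1) * jacCoef a b n k := by
  rcases lt_or_ge k n with h | h
  · have hc : ((n.choose (k+1) : ℕ) : ℂ) * (k + 1) = n.choose k * ((n : ℂ) - k) := by
      have := Nat.choose_succ_right_eq n k
      rw [← Nat.cast_sub h.le]
      exact_mod_cast this
    unfold jacCoef
    rw [Finset.prod_range_succ, Finset.prod_eq_prod_Ico_succ_bot h]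
    linear_combination (a + k + 1) * (∏ i ∈ Finset.Ico (k+1) n, (a + i + 1)) *
      (∏ i ∈ Finset.range k, (a + b + n + 1 + i)) * (a + b + n + 1 + k) * hc
  · have h1 : jacCoef a b n (k+1) = 0 := by
      simp [jacCoef, Nat.choose_eq_zero_of_lt (Nat.lt_succ_of_le h)]
    rw [h1]
    rcases h.eq_or_lt with h | h
    · subst h; simp
    · simp [jacCoef, Nat.choose_eq_zero_of_lt h]

open Polynomial in
lemma jac_ode (a b : ℂ) (n : ℕ) :
    X * (1 + X) * derivative (derivative (jacPoly a b n))
      + (C (a + 1) + C (a + b + 2) * X) * derivative (jacPoly a b n)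
      - C ((n : ℂ) * (n + a + b + 1)) * jacPoly a b n = 0 := by
  have e : X * (1 + X) * derivative (derivative (jacPoly a b n))
      + (C (a + 1) + C (a + b + 2) * X) * derivative (jacPoly a b n)
      - C ((n : ℂ) * (n + a + b + 1)) * jacPoly a b n
      = X * derivative (derivative (jacPoly a b n))
      + X * (X * derivative (derivative (jacPoly a b n)))
      + C (a + 1) * derivative (jacPoly a b n)
      + C (a + b + 2) * (X * derivative (jacPoly a b n))
      - C ((n : ℂ) * (n + a + b + 1)) * jacPoly a b n := by ring
  rw [e]
  ext k
  have hr := jacCoef_rec a b n k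
  rcases k with _ | _ | k
  · simp only [coeff_add, coeff_sub, coeff_C_mul, coeff_X_mul_zero, coeff_derivative,
      jacPoly_coeff, coeff_zero]
    push_cast at hr ⊢
    linear_combination hr
  · simp only [coeff_add, coeff_sub, coeff_C_mul, coeff_X_mul, coeff_X_mul_zero,
      coeff_derivative, jacPoly_coeff, coeff_zero, zero_add] at hr ⊢
    push_cast at hr ⊢
    linear_combination hr
  · simp only [coeff_add, coeff_sub, coeff_C_mul, coeff_X_mul,
      coeff_derivative, jacPoly_coeff, coeff_zero] at hr ⊢
    push_cast at hr ⊢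
    linear_combination hr

open Polynomial in
lemma jac_ode_iter (a b : ℂ) (n k : ℕ) :
    X * (1 + X) * derivative^[k+2] (jacPoly a b n)
      + ((k : ℂ[X]) * (1 + 2 * X) + C (a + 1) + C (a + b + 2) * X)
        * derivative^[k+1] (jacPoly a b n)
      + ((k : ℂ[X]) * ((k : ℂ[X]) - 1) + (k : ℂ[X]) * C (a + b + 2) - C ((n : ℂ) * (n + a + b + 1)))
        * derivative^[k] (jacPoly a b n) = 0 := by
  induction k with
  | zero =>
    have := jac_ode a b n
    simp only [Function.iterate_succ_apply', Function.iterate_zero, id]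
    push_cast
    linear_combination this
  | succ k ih =>
    have := congrArg derivative ih
    simp only [Function.iterate_succ_apply', derivative_add, derivative_sub, derivative_mul,
      derivative_X, derivative_C, derivative_one, derivative_natCast, derivative_ofNat,
      derivative_zero] at this ⊢
    push_cast
    linear_combination this

lemma jac_main (a b : ℂ) (n : ℕ) (hn : 1 ≤ n)
    (ha : ∀ k : ℕ, 1 ≤ k → k ≤ n → a ≠ -(k : ℂ))
    (hb : ∀ k : ℕ, 1 ≤ k → k ≤ n → b ≠ -(k : ℂ))
    (hab : ∀ k : ℕ, n + 1 ≤ k → k ≤ 2 * n → a + b ≠ -(k : ℂ)) (z : ℂ)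
    (h0 : (jacPoly a b n).eval z = 0)
    (h1 : (Polynomial.derivative (jacPoly a b n)).eval z = 0) : False := by
  have step : ∀ k : ℕ, z * (1 + z) * (Polynomial.derivative^[k+2] (jacPoly a b n)).eval z
      + ((k : ℂ) * (1 + 2 * z) + (a + 1) + (a + b + 2) * z)
        * (Polynomial.derivative^[k+1] (jacPoly a b n)).eval z
      + ((k : ℂ) * (k - 1) + k * (a + b + 2) - ((n : ℂ) * (n + a + b + 1)))
        * (Polynomial.derivative^[k] (jacPoly a b n)).eval z = 0 := by
    intro k
    have := congrArg (Polynomial.eval z) (jac_ode_iter a b n k)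
    simpa only [Polynomial.eval_add, Polynomial.eval_mul, Polynomial.eval_sub, Polynomial.eval_X,
      Polynomial.eval_C, Polynomial.eval_one, Polynomial.eval_natCast, Polynomial.eval_ofNat,
      Polynomial.eval_zero] using this
  have key : ∀ k : ℕ, k + 1 ≤ n → (Polynomial.derivative^[k] (jacPoly a b n)).eval z = 0 ∧
      (Polynomial.derivative^[k+1] (jacPoly a b n)).eval z = 0 := by
    intro k
    induction k with
    | zero => intro _; exact ⟨h0, h1⟩
    | succ k ih =>
      intro hk
      obtain ⟨i0, i1⟩ := ih (by omega)
      refine ⟨i1, ?_⟩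
      by_cases hz : z * (1 + z) = 0
      · have s := step (k + 1)
        rw [hz, i1] at s
        simp only [zero_mul, mul_zero, zero_add, add_zero] at s
        refine (mul_eq_zero.mp s).resolve_left ?_
        rcases mul_eq_zero.mp hz with hz | hz
        · subst hz
          intro h
          apply ha (k + 2) (by omega) (by omega)
          push_cast at h ⊢
          linear_combination h
        · have hz : z = -1 := by linear_combination hz
          subst hz
          intro h
          apply hb (k + 2) (by omega) (by omega)
          push_cast at h ⊢
          linear_combination -h
      · have s := step k
        rw [i0, i1] at s
        simp only [mul_zero, add_zero] at s
        exact (mul_eq_zero.mp s).resolve_left hz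
  have hlast : (Polynomial.derivative^[n] (jacPoly a b n)).eval z = 0 := by
    have := (key (n - 1) (by omega)).2
    rwa [Nat.sub_add_cancel hn] at this
  have hdeg : (jacPoly a b n).natDegree ≤ n := by
    rw [Polynomial.natDegree_le_iff_coeff_eq_zero]
    intro k hk
    rw [jacPoly_coeff]
    simp [jacCoef, Nat.choose_eq_zero_of_lt hk]
  have hconst : Polynomial.derivative^[n] (jacPoly a b n)
      = Polynomial.C ((n.factorial : ℂ) * jacCoef a b n n) := by
    ext m
    rw [Polynomial.coeff_iterate_derivative, jacPoly_coeff, Polynomial.coeff_C]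
    rcases Nat.eq_zero_or_pos m with h | h
    · subst h; simp [Nat.descFactorial_self]
    · rw [if_neg (by omega)]
      simp [jacCoef, Nat.choose_eq_zero_of_lt (show n < m + n by omega)]
  rw [hconst, Polynomial.eval_C] at hlast
  have hf : (n.factorial : ℂ) ≠ 0 := by exact_mod_cast n.factorial_ne_zero
  have hc := (mul_eq_zero.mp hlast).resolve_left hf
  simp only [jacCoef, Nat.choose_self, Finset.Ico_self, Finset.prod_empty, Nat.cast_one,
    one_mul, Finset.prod_eq_zero_iff, Finset.mem_range] at hc
  obtain ⟨i, hi, h⟩ := hc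
  apply hab (n + 1 + i) (by omega) (by omega)
  push_cast
  linear_combination h

lemma jacobiC_eq (α β : ℝ) (n : ℕ) : jacobiC α β n = fun x =>
    (Nat.factorial n : ℂ)⁻¹ * (jacPoly α β n).eval ((x - 1) / 2) := by
  funext x
  simp only [jacobiC, jacPoly, jacCoef, Polynomial.eval_finsetSum, Polynomial.eval_mul,
    Polynomial.eval_C, Polynomial.eval_pow, Polynomial.eval_X]

theorem stmt18 (n : ℕ) (hn : 1 ≤ n) (α β : ℝ)
    (hα : ∀ k : ℕ, 1 ≤ k → k ≤ n → α ≠ -(k : ℝ))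
    (hβ : ∀ k : ℕ, 1 ≤ k → k ≤ n → β ≠ -(k : ℝ))
    (hαβ : ∀ k : ℕ, n + 1 ≤ k → k ≤ 2 * n → α + β ≠ -(k : ℝ)) :
    ∀ z : ℂ, jacobiC α β n z = 0 → deriv (jacobiC α β n) z ≠ 0 := by
  intro z h0 h1
  have hf : (n.factorial : ℂ)⁻¹ ≠ 0 := inv_ne_zero (by exact_mod_cast n.factorial_ne_zero)
  have hd : HasDerivAt (jacobiC α β n) ((Nat.factorial n : ℂ)⁻¹ *
      ((Polynomial.derivative (jacPoly α β n)).eval ((z - 1) / 2) * (1 / 2))) z := by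
    rw [jacobiC_eq]
    have hi : HasDerivAt (fun x : ℂ => (x - 1) / 2) (1 / 2) z :=
      ((hasDerivAt_id z).sub_const 1).div_const 2
    exact (((jacPoly α β n).hasDerivAt ((z - 1) / 2)).comp z hi).const_mul _
  rw [hd.deriv] at h1
  rw [jacobiC_eq] at h0
  refine jac_main α β n hn ?_ ?_ ?_ ((z - 1) / 2) ((mul_eq_zero.mp h0).resolve_left hf) ?_
  · intro k h h' e; exact hα k h h' (by exact_mod_cast e)
  · intro k h h' e; exact hβ k h h' (by exact_mod_cast e)
  · intro k h h' e; exact hαβ k h h' (by exact_mod_cast e)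
  · exact (mul_eq_zero.mp ((mul_eq_zero.mp h1).resolve_left hf)).resolve_right (by norm_num)
end

section
/- Let m ∈ ℕ with m ≥ 1 and let α, β ∈ ℝ be such that either both β ∈ (−1,0) and α+1−m ∈ (−1,0), or both β > 0 and α+1−m > 0. Then P_m^{(−α−1,β−1)}(x) ≠ 0 for every real x ∈ (−1,1). -/
open Finset

/-- Jacobi polynomial `P_n^{(α,β)}(x)` for arbitrary real parameters. -/
noncomputable def jacobi (α β : ℝ) (n : ℕ) (x : ℝ) : ℝ :=
  (Nat.factorial n : ℝ)⁻¹ *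
    ∑ k ∈ Finset.range (n + 1),
      (n.choose k : ℝ) *
        (∏ i ∈ Finset.Ico k n, (α + i + 1)) *
        (∏ i ∈ Finset.range k, (α + β + n + 1 + i)) *
        ((x - 1) / 2) ^ k

theorem vander_aux (k : ℕ) : ∀ a c : ℝ,
    ∑ s ∈ range (k + 1), (k.choose s : ℝ) *
      ((∏ i ∈ Ico s k, (a + i + 1)) * ∏ j ∈ range s, (c - j)) =
    ∏ i ∈ range k, (a + c + 1 + i) := by
  induction k with
  | zero => intro a c; simp
  | succ k ih =>
    intro a c
    rw [Finset.sum_choose_succ_mul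
      (fun s _ => (∏ i ∈ Ico s (k + 1), (a + i + 1)) * ∏ j ∈ range s, (c - j))]
    have h1 : ∑ s ∈ range (k + 1), (k.choose s : ℝ) *
        ((∏ i ∈ Ico s (k + 1), (a + i + 1)) * ∏ j ∈ range s, (c - j)) =
        (a + k + 1) * ∏ i ∈ range k, (a + c + 1 + i) := by
      rw [← ih a c, Finset.mul_sum]
      refine Finset.sum_congr rfl fun s hs => ?_
      rw [Finset.prod_Ico_succ_top (by have := Finset.mem_range.1 hs; omega)]
      ring
    have h2 : ∑ s ∈ range (k + 1), (k.choose s : ℝ) *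
        ((∏ i ∈ Ico (s + 1) (k + 1), (a + i + 1)) * ∏ j ∈ range (s + 1), (c - j)) =
        c * ∏ i ∈ range k, (a + c + 1 + i) := by
      have h3 := ih (a + 1) (c - 1)
      have h4 : ∏ i ∈ range k, (a + 1 + (c - 1) + 1 + i) = ∏ i ∈ range k, (a + c + 1 + i) :=
        Finset.prod_congr rfl fun i _ => by ring
      rw [← h4, ← h3, Finset.mul_sum]
      refine Finset.sum_congr rfl fun s hs => ?_
      rw [Finset.prod_range_succ', ← Finset.prod_Ico_add' (fun i : ℕ => (a + i + 1)) s k 1]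
      have e1 : ∏ i ∈ Ico s k, (a + ((i + 1 : ℕ) : ℝ) + 1) = ∏ i ∈ Ico s k, (a + 1 + i + 1) :=
        Finset.prod_congr rfl fun i _ => by push_cast; ring
      have e2 : ∏ i ∈ range s, (c - ((i + 1 : ℕ) : ℝ)) = ∏ i ∈ range s, (c - 1 - i) :=
        Finset.prod_congr rfl fun i _ => by push_cast; ring
      rw [e1, e2]
      push_cast
      ring
    rw [h1, h2, Finset.prod_range_succ]
    ring

theorem jacobi_sum_aux (n : ℕ) (a b t : ℝ) :
    ∑ k ∈ range (n + 1), (n.choose k : ℝ) * (∏ i ∈ Ico k n, (a + i + 1)) *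
      (∏ i ∈ range k, (a + b + n + 1 + i)) * t ^ k =
    ∑ s ∈ range (n + 1), (n.choose s : ℝ) * (∏ i ∈ Ico s n, (a + i + 1)) *
      (∏ j ∈ range s, (b + n - j)) * (t ^ s * (t + 1) ^ (n - s)) := by
  have hR : ∀ s ∈ range (n + 1), (n.choose s : ℝ) * (∏ i ∈ Ico s n, (a + i + 1)) *
      (∏ j ∈ range s, (b + n - j)) * (t ^ s * (t + 1) ^ (n - s)) =
      ∑ l ∈ range (n + 1 - s), (n.choose s : ℝ) * (∏ i ∈ Ico s n, (a + i + 1)) *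
      (∏ j ∈ range s, (b + n - j)) * (t ^ s * (t ^ l * ((n - s).choose l : ℝ))) := by
    intro s hs
    have := Finset.mem_range.1 hs
    rw [add_pow, show n + 1 - s = n - s + 1 by omega, Finset.mul_sum, Finset.mul_sum]
    refine Finset.sum_congr rfl fun l _ => by simp
  rw [Finset.sum_congr rfl hR, ← Finset.sum_range_diag_flip (n + 1) (fun s l =>
    (n.choose s : ℝ) * (∏ i ∈ Ico s n, (a + i + 1)) *
      (∏ j ∈ range s, (b + n - j)) * (t ^ s * (t ^ l * ((n - s).choose l : ℝ))))]
  refine Finset.sum_congr rfl fun k hk => ?_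
  have hk' := Finset.mem_range.1 hk
  have h1 : ∏ i ∈ range k, (a + b + n + 1 + i) = ∏ i ∈ range k, (a + (b + n) + 1 + i) :=
    Finset.prod_congr rfl fun i _ => by ring
  rw [h1, ← vander_aux k a (b + n), Finset.mul_sum, Finset.sum_mul]
  refine Finset.sum_congr rfl fun s hs => ?_
  have hs' := Finset.mem_range.1 hs
  have h2 : (n.choose k : ℝ) * (k.choose s : ℝ) = n.choose s * ((n - s).choose (k - s) : ℝ) := by
    exact_mod_cast Nat.choose_mul (n := n) (k := k) (s := s) (by omega)
  have h3 := Finset.prod_Ico_consecutive (fun i : ℕ => (a + i + 1)) (m := s) (n := k) (k := n)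
    (by omega) (by omega)
  have h4 : t ^ k = t ^ s * t ^ (k - s) := by rw [← pow_add]; congr 1; omega
  rw [← h3, h4]
  linear_combination ((∏ i ∈ Ico k n, (a + i + 1)) * (∏ i ∈ Ico s k, (a + i + 1)) *
    (∏ j ∈ range s, (b + n - j)) * (t ^ s * t ^ (k - s))) * h2

theorem term_sign_two (m s : ℕ) (hs : s ≤ m) (α β u : ℝ) (hu : 0 < u) (hβ : 0 < β)
    (hα : 0 < α + 1 - m) :
    0 < (-1 : ℝ) ^ m * ((∏ i ∈ Ico s m, (-α - 1 + i + 1)) *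
      (∏ j ∈ range s, (β - 1 + m - j)) * (-u) ^ s) := by
  have hA : ∏ i ∈ Ico s m, (-α - 1 + (i : ℝ) + 1) =
      (-1) ^ (m - s) * ∏ i ∈ Ico s m, (α - i) := by
    rw [← Nat.card_Ico, ← Finset.prod_const, ← Finset.prod_mul_distrib]
    exact Finset.prod_congr rfl fun i _ => by ring
  have hP : 0 < ∏ i ∈ Ico s m, (α - (i : ℝ)) := Finset.prod_pos fun i hi => by
    have : (i : ℝ) + 1 ≤ m := by exact_mod_cast (Finset.mem_Ico.1 hi).2
    linarith
  have hQ : 0 < ∏ j ∈ range s, (β - 1 + m - (j : ℝ)) := Finset.prod_pos fun i hi => by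
    have : (i : ℝ) + 1 ≤ m := by
      have := Finset.mem_range.1 hi
      exact_mod_cast (by omega : i + 1 ≤ m)
    linarith
  have e : (-1 : ℝ) ^ m * ((∏ i ∈ Ico s m, (-α - 1 + i + 1)) *
      (∏ j ∈ range s, (β - 1 + m - j)) * (-u) ^ s) =
      (∏ i ∈ Ico s m, (α - (i : ℝ))) * (∏ j ∈ range s, (β - 1 + m - (j : ℝ))) * u ^ s := by
    have h1 : (-1 : ℝ) ^ m * ((-1) ^ (m - s) * (-1) ^ s) = 1 := by
      rw [← pow_add, Nat.sub_add_cancel hs, ← mul_pow]; simp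
    rw [hA, neg_pow u]
    linear_combination ((∏ i ∈ Ico s m, (α - (i : ℝ))) *
      (∏ j ∈ range s, (β - 1 + m - (j : ℝ))) * u ^ s) * h1
  rw [e]
  positivity

theorem term_sign_one (n s : ℕ) (hs : s ≤ n + 1) (α β u : ℝ) (hu : 0 < u)
    (hβ : β ∈ Set.Ioo (-1 : ℝ) 0) (hα : α + 1 - (n + 1 : ℕ) ∈ Set.Ioo (-1 : ℝ) 0) :
    0 < (-1 : ℝ) ^ n * ((∏ i ∈ Ico s (n + 1), (-α - 1 + i + 1)) *
      (∏ j ∈ range s, (β - 1 + (n + 1 : ℕ) - j)) * (-u) ^ s) := by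
  obtain ⟨hβ1, hβ2⟩ := hβ
  obtain ⟨hα1, hα2⟩ := hα
  push_cast at hα1 hα2
  rcases Nat.lt_or_ge n s with h | h
  · obtain rfl : s = n + 1 := by omega
    rw [Finset.prod_range_succ]
    have hQ : 0 < ∏ j ∈ range n, (β - 1 + (n + 1 : ℕ) - (j : ℝ)) :=
      Finset.prod_pos fun i hi => by
        have : (i : ℝ) + 1 ≤ n := by exact_mod_cast Finset.mem_range.1 hi
        push_cast
        linarith
    have h1 : (-1 : ℝ) ^ n * (-1) ^ n = 1 := by rw [← mul_pow]; simp
    have e : (-1 : ℝ) ^ n * ((∏ i ∈ Ico (n + 1) (n + 1), (-α - 1 + (i : ℝ) + 1)) *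
        ((∏ j ∈ range n, (β - 1 + (n + 1 : ℕ) - (j : ℝ))) * (β - 1 + (n + 1 : ℕ) - (n : ℝ)))
          * (-u) ^ (n + 1)) =
        (∏ j ∈ range n, (β - 1 + (n + 1 : ℕ) - (j : ℝ))) * (-β) * u ^ (n + 1) := by
      rw [neg_pow u, Finset.Ico_self, Finset.prod_empty,
        show β - 1 + ((n + 1 : ℕ) : ℝ) - (n : ℝ) = β by push_cast; ring]
      linear_combination ((∏ j ∈ range n, (β - 1 + (n + 1 : ℕ) - (j : ℝ))) * (-β)
        * u ^ (n + 1)) * h1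
    rw [e]
    have : 0 < -β := by linarith
    positivity
  · have := term_sign_two n s h α (β + 1) u hu (by linarith) (by linarith)
    rw [Finset.prod_Ico_succ_top h]
    have e : ∏ j ∈ range s, (β - 1 + (n + 1 : ℕ) - (j : ℝ)) =
        ∏ j ∈ range s, (β + 1 - 1 + n - (j : ℝ)) :=
      Finset.prod_congr rfl fun i _ => by push_cast; ring
    rw [e]
    have h2 : 0 < -α - 1 + (n : ℝ) + 1 := by linarith
    have := mul_pos this h2
    refine this.trans_eq ?_
    ring

theorem stmt19 (m : ℕ) (hm : 1 ≤ m) (α β : ℝ)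
    (h : (β ∈ Set.Ioo (-1 : ℝ) 0 ∧ α + 1 - m ∈ Set.Ioo (-1 : ℝ) 0) ∨
      (0 < β ∧ 0 < α + 1 - m)) :
    ∀ x ∈ Set.Ioo (-1 : ℝ) 1, jacobi (-α - 1) (β - 1) m x ≠ 0 := by
  rintro x ⟨hx1, hx2⟩
  unfold jacobi
  rw [jacobi_sum_aux]
  refine mul_ne_zero (inv_ne_zero (by exact_mod_cast Nat.factorial_ne_zero m)) ?_
  obtain ⟨u, hu⟩ : ∃ u, u = (1 - x) / 2 := ⟨_, rfl⟩
  have hu0 : 0 < u := by linarith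
  have hv0 : 0 < (x - 1) / 2 + 1 := by linarith
  have hxu : (x - 1) / 2 = -u := by linarith
  rw [hxu] at hv0 ⊢
  obtain ⟨ε, hε⟩ : ∃ ε : ℝ, ∀ s ≤ m, 0 < ε * ((∏ i ∈ Ico s m, (-α - 1 + (i : ℝ) + 1)) *
      (∏ j ∈ range s, (β - 1 + m - (j : ℝ))) * (-u) ^ s) := by
    rcases h with ⟨hb, ha⟩ | ⟨hb, ha⟩
    · obtain ⟨n, rfl⟩ : ∃ n, m = n + 1 := ⟨m - 1, by omega⟩
      exact ⟨(-1) ^ n, fun s hs => term_sign_one n s hs α β u hu0 hb ha⟩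
    · exact ⟨(-1) ^ m, fun s hs => term_sign_two m s hs α β u hu0 hb ha⟩
  intro h0
  have h1 := congrArg (fun z => ε * z) h0
  simp only [mul_zero, Finset.mul_sum] at h1
  refine absurd h1 (ne_of_gt (Finset.sum_pos (fun s hs => ?_) ⟨0, by simp⟩))
  have hs' : s ≤ m := by have := Finset.mem_range.1 hs; omega
  have hc : (0 : ℝ) < m.choose s := by exact_mod_cast Nat.choose_pos hs'
  have := mul_pos (mul_pos hc (hε s hs')) (pow_pos hv0 (m - s))
  refine this.trans_eq ?_
  ring
end
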